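/- For every n ≥ 1 and every (k_1,…,k_n) ∈ ℤ^n, α(n;k_1,…,k_n) = Σ (−1)^{s(A)}, where the sum runs over those A ∈ 𝒯_n(k_1,…,k_n) whose underlying array satisfies the condition: a_{i,j−1} ≤ a_{i,j} ≤ a_{i,j+1} implies a_{i−1,j−1} < a_{i−1,j}. -/

import Mathlib

/-- A triangular array of size `n`, encoded as a function `ℕ → ℕ → ℤ` whose
meaningful entries are `a i j` for `1 ≤ j ≤ i ≤ n` (row `i` has entries
`a i 1, …, a i i`), normalized to be `0` outside this region. -/
def IsTri (n : ℕ) (a : ℕ → ℕ → ℤ) : Prop :=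
  ∀ i j, ¬ (1 ≤ j ∧ j ≤ i ∧ i ≤ n) → a i j = 0

/-- A Monotone Triangle of size `n`: strict increase along rows and weak
increase along North-East and South-East diagonals. -/
def IsMT (n : ℕ) (a : ℕ → ℕ → ℤ) : Prop :=
  IsTri n a ∧
  (∀ i j, 1 ≤ j → j + 1 ≤ i → i ≤ n → a i j < a i (j + 1)) ∧
  (∀ i j, 1 ≤ j → j ≤ i → i + 1 ≤ n →
    a (i + 1) j ≤ a i j ∧ a i j ≤ a (i + 1) (j + 1))

/-- A Generalized Monotone Triangle (GMT) of size `n`. -/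
def IsGMT (n : ℕ) (a : ℕ → ℕ → ℤ) : Prop :=
  IsTri n a ∧
  -- (1) each entry is weakly bounded by its SW- and SE-neighbour
  (∀ i j, 1 ≤ j → j ≤ i → i + 1 ≤ n →
    min (a (i + 1) j) (a (i + 1) (j + 1)) ≤ a i j ∧
    a i j ≤ max (a (i + 1) j) (a (i + 1) (j + 1))) ∧
  -- (2) three weakly increasing consecutive entries force strict increase above
  (∀ i j, 1 ≤ j → j + 1 ≤ i → i + 1 ≤ n →
    a (i + 1) j ≤ a (i + 1) (j + 1) → a (i + 1) (j + 1) ≤ a (i + 1) (j + 2) →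
    a i j < a i (j + 1)) ∧
  -- (3) equality over a strict descent forces an equal neighbour
  (∀ i j, 1 ≤ j → j ≤ i → i + 1 ≤ n →
    (a i j = a (i + 1) j → a (i + 1) (j + 1) < a (i + 1) j →
      2 ≤ j ∧ a i (j - 1) = a i j) ∧
    (a (i + 1) (j + 1) < a (i + 1) j → a (i + 1) (j + 1) = a i j →
      j + 1 ≤ i ∧ a i (j + 1) = a i j))

/-- The bottom row of a triangular array of size `n` is `(k 0, …, k (n-1))`
(1-indexed in the array). -/
def BottomRow (n : ℕ) (a : ℕ → ℕ → ℤ) (k : Fin n → ℤ) : Prop :=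
  ∀ j : Fin n, a n (j.1 + 1) = k j

/-- The set of Monotone Triangles of size `n` with bottom row `k`. -/
def MTset (n : ℕ) (k : Fin n → ℤ) : Set (ℕ → ℕ → ℤ) :=
  {a | IsMT n a ∧ BottomRow n a k}

/-- The set `𝒢ₙ(k)` of Generalized Monotone Triangles of size `n` with bottom row `k`. -/
def GMTset (n : ℕ) (k : Fin n → ℤ) : Set (ℕ → ℕ → ℤ) :=
  {a | IsGMT n a ∧ BottomRow n a k}

/-- The positions `(i, j)` of newcomers of a triangular array:
`a (i+1) j > a i j > a (i+1) (j+1)`. -/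
def newcomersF (n : ℕ) (a : ℕ → ℕ → ℤ) : Finset (ℕ × ℕ) :=
  ((Finset.range (n + 1)) ×ˢ (Finset.range (n + 1))).filter (fun p =>
    1 ≤ p.2 ∧ p.2 ≤ p.1 ∧ p.1 + 1 ≤ n ∧
    a p.1 p.2 < a (p.1 + 1) p.2 ∧ a (p.1 + 1) (p.2 + 1) < a p.1 p.2)

/-- The positions `(i, j)` of sign-changing pairs `(a i j, a i (j+1))` of a
triangular array: two equal consecutive entries whose interlaced neighbour
below is also equal to them. -/
def scPairsF (n : ℕ) (a : ℕ → ℕ → ℤ) : Finset (ℕ × ℕ) :=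
  ((Finset.range (n + 1)) ×ˢ (Finset.range (n + 1))).filter (fun p =>
    1 ≤ p.2 ∧ p.2 + 1 ≤ p.1 ∧ p.1 + 1 ≤ n ∧
    a p.1 p.2 = a p.1 (p.2 + 1) ∧ a (p.1 + 1) (p.2 + 1) = a p.1 p.2)

/-- `sc(A)`: the total number of newcomers and sign-changing pairs of `A`. -/
def scT (n : ℕ) (a : ℕ → ℕ → ℤ) : ℕ :=
  (newcomersF n a).card + (scPairsF n a).card

/-- `IsAlpha N f` asserts that `f` is the polynomial function
`α(N; k₁, …, k_N)`: it is given by a polynomial with rational coefficients of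
degree at most `N - 1` in each variable, and its value at every strictly
increasing integer sequence equals the number of Monotone Triangles with that
bottom row. -/
def IsAlpha (N : ℕ) (f : (Fin N → ℤ) → ℚ) : Prop :=
  (∃ P : MvPolynomial (Fin N) ℚ, (∀ i : Fin N, P.degreeOf i ≤ N - 1) ∧
    ∀ k : Fin N → ℤ, f k = MvPolynomial.eval (fun i => (k i : ℚ)) P) ∧
  (∀ k : Fin N → ℤ, StrictMono k → f k = ((MTset N k).ncard : ℚ))

/-- Conditions on a triangular array `a` of size `n` together with a set `S` of
special entries (positions `(i,j)` with `1 < j < i ≤ n`, no two adjacent in the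
same row): special entries equal both their parents, and every entry that is
not a parent of a special entry lies weakly between its two lower neighbours if
they weakly increase, and strictly between them if they strictly decrease (in
which case it is an inversion). -/
def SpecOK (n : ℕ) (a : ℕ → ℕ → ℤ) (S : Finset (ℕ × ℕ)) : Prop :=
  (∀ p ∈ S, 1 < p.2 ∧ p.2 < p.1 ∧ p.1 ≤ n) ∧
  (∀ p ∈ S, ∀ q ∈ S, p.1 = q.1 → q.2 ≠ p.2 + 1) ∧
  (∀ p ∈ S, a (p.1 - 1) (p.2 - 1) = a p.1 p.2 ∧ a (p.1 - 1) p.2 = a p.1 p.2) ∧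
  (∀ i j, 1 ≤ j → j ≤ i → i + 1 ≤ n → (i + 1, j) ∉ S → (i + 1, j + 1) ∉ S →
    (a (i + 1) j ≤ a (i + 1) (j + 1) →
      a (i + 1) j ≤ a i j ∧ a i j ≤ a (i + 1) (j + 1)) ∧
    (a (i + 1) (j + 1) < a (i + 1) j →
      a (i + 1) (j + 1) < a i j ∧ a i j < a (i + 1) j))

/-- An element of `𝒯ₙ`: a triangular array together with an admissible set of
special entries. -/
def IsTArr (n : ℕ) (a : ℕ → ℕ → ℤ) (S : Finset (ℕ × ℕ)) : Prop :=
  IsTri n a ∧ SpecOK n a S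

/-- The positions of inversions of an element of `𝒯ₙ`: entries that are not
parents of special entries and whose two lower neighbours strictly decrease. -/
def invF (n : ℕ) (a : ℕ → ℕ → ℤ) (S : Finset (ℕ × ℕ)) : Finset (ℕ × ℕ) :=
  ((Finset.range (n + 1)) ×ˢ (Finset.range (n + 1))).filter (fun p =>
    1 ≤ p.2 ∧ p.2 ≤ p.1 ∧ p.1 + 1 ≤ n ∧
    (p.1 + 1, p.2) ∉ S ∧ (p.1 + 1, p.2 + 1) ∉ S ∧
    a (p.1 + 1) (p.2 + 1) < a (p.1 + 1) p.2)

/-- `s(A)`: the total number of special entries and inversions. -/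
def sT (n : ℕ) (a : ℕ → ℕ → ℤ) (S : Finset (ℕ × ℕ)) : ℕ :=
  S.card + (invF n a S).card

/-- The set `𝒯ₙ(k)` of triangular arrays with special entries and bottom row `k`. -/
def TSet (n : ℕ) (k : Fin n → ℤ) : Set ((ℕ → ℕ → ℤ) × Finset (ℕ × ℕ)) :=
  {A | IsTArr n A.1 A.2 ∧ BottomRow n A.1 k}

/-- The condition `a_{i,j-1} ≤ a_{i,j} ≤ a_{i,j+1} → a_{i-1,j-1} < a_{i-1,j}`. -/
def StrictCond (n : ℕ) (a : ℕ → ℕ → ℤ) : Prop :=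
  ∀ i j, 2 ≤ j → j + 1 ≤ i → i ≤ n →
    a i (j - 1) ≤ a i j → a i j ≤ a i (j + 1) → a (i - 1) (j - 1) < a (i - 1) j

/-- The entries of a finite row, indexed from `1` and extended by `0`. -/
def rowOf {n : ℕ} (k : Fin n → ℤ) (j : ℕ) : ℤ :=
  if h : 1 ≤ j ∧ j ≤ n then k ⟨j - 1, by omega⟩ else 0

theorem rowOf_succ {n : ℕ} (k : Fin n → ℤ) (j : Fin n) : rowOf k (j.1 + 1) = k j := by
  simp [rowOf]

theorem rowOf_of_not {n : ℕ} (k : Fin n → ℤ) {j : ℕ} (h : ¬ (1 ≤ j ∧ j ≤ n)) :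
    rowOf k j = 0 := by
  simp [rowOf, h]

/-- The admissible sets of special positions in a row of length `n + 1`. -/
def specialSets (n : ℕ) : Finset (Finset ℕ) :=
  (Finset.Icc 2 n).powerset.filter fun s => ∀ j ∈ s, j + 1 ∉ s

theorem mem_specialSets {n : ℕ} {s : Finset ℕ} :
    s ∈ specialSets n ↔ (∀ j ∈ s, 2 ≤ j ∧ j ≤ n) ∧ ∀ j ∈ s, j + 1 ∉ s := by
  simp [specialSets, Finset.subset_iff]

/-- The values allowed at position `j` directly above the row `k` with special positions `s`. -/
noncomputable def choices (k : ℕ → ℤ) (s : Finset ℕ) (j : ℕ) : Finset ℤ :=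
  if j ∈ s then {k j} else if j + 1 ∈ s then {k (j + 1)} else
    if k j ≤ k (j + 1) then Finset.Icc (k j) (k (j + 1)) else Finset.Ioo (k (j + 1)) (k j)

/-- The sign contributed by position `j` above the row `k`: negative exactly at inversions. -/
def entrySign (k : ℕ → ℤ) (s : Finset ℕ) (j : ℕ) : ℚ :=
  if j ∉ s ∧ j + 1 ∉ s ∧ k (j + 1) < k j then -1 else 1

/-- The pairs of an admissible set of special positions of the row `k` of length `n + 1` and a
row of length `n` compatible with it. -/
noncomputable def rowPairs (n : ℕ) (k : ℕ → ℤ) : Finset (Σ _ : Finset ℕ, Fin n → ℤ) :=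
  (specialSets n).sigma fun s => Fintype.piFinset fun j : Fin n => choices k s (j.1 + 1)

theorem mem_rowPairs {n : ℕ} {k : ℕ → ℤ} {p : Σ _ : Finset ℕ, Fin n → ℤ} :
    p ∈ rowPairs n k ↔ p.1 ∈ specialSets n ∧
      ∀ j, 1 ≤ j → j ≤ n → rowOf p.2 j ∈ choices k p.1 j := by
  simp only [rowPairs, Finset.mem_sigma, Fintype.mem_piFinset]
  refine and_congr_right fun _ => ⟨fun h j h1 h2 => ?_, fun h j => ?_⟩
  · have := h ⟨j - 1, by omega⟩
    rw [← rowOf_succ p.2] at this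
    simpa [Nat.sub_add_cancel h1] using this
  · rw [← rowOf_succ p.2]
    exact h _ (by omega) j.2

/-- The sign of a set of special positions together with the inversions it leaves. -/
def rowSign (n : ℕ) (k : ℕ → ℤ) (s : Finset ℕ) : ℚ :=
  (-1) ^ s.card * ∏ j : Fin n, entrySign k s (j.1 + 1)

/-- Three weakly increasing consecutive entries of `k` force a strict increase in `l` above. -/
def StrictRow (n : ℕ) (k l : ℕ → ℤ) : Prop :=
  ∀ j, 2 ≤ j → j ≤ n → k (j - 1) ≤ k j → k j ≤ k (j + 1) → l (j - 1) < l j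

/-- The signed sum of `A` over the rows directly above `k`. -/
noncomputable def rowSum (n : ℕ) (k : ℕ → ℤ) (A : (Fin n → ℤ) → ℚ) : ℚ :=
  ∑ p ∈ rowPairs n k, rowSign n k p.1 * A p.2

open Classical in
/-- The signed sum of `A` over the rows directly above `k` that satisfy `StrictRow`. -/
noncomputable def strictRowSum (n : ℕ) (k : ℕ → ℤ) (A : (Fin n → ℤ) → ℚ) : ℚ :=
  ∑ p ∈ (rowPairs n k).filter (fun p => StrictRow n k (rowOf p.2)), rowSign n k p.1 * A p.2

/-- `A` vanishes on rows with three equal consecutive entries. -/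
def VanishesOnTriples {n : ℕ} (A : (Fin n → ℤ) → ℚ) : Prop :=
  ∀ l j, 2 ≤ j → j + 1 ≤ n → rowOf l (j - 1) = rowOf l j → rowOf l j = rowOf l (j + 1) → A l = 0

/-- Add `j` to `s` or remove it. -/
def toggle (j : ℕ) (s : Finset ℕ) : Finset ℕ := if j ∈ s then s.erase j else insert j s

theorem mem_toggle {i j : ℕ} {s : Finset ℕ} :
    i ∈ toggle j s ↔ (i ≠ j ∧ i ∈ s) ∨ (i = j ∧ j ∉ s) := by
  unfold toggle
  split_ifs <;> grind

theorem toggle_toggle (j : ℕ) (s : Finset ℕ) : toggle j (toggle j s) = s := by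
  ext i
  simp only [mem_toggle]
  grind

theorem toggle_ne (j : ℕ) (s : Finset ℕ) : toggle j s ≠ s := fun h => by
  have := congrArg (j ∈ ·) h
  simp [mem_toggle] at this

theorem neg_one_pow_card_toggle (j : ℕ) (s : Finset ℕ) :
    (-1 : ℚ) ^ (toggle j s).card = -(-1) ^ s.card := by
  unfold toggle
  split_ifs with h
  · rw [← Finset.card_erase_add_one h, pow_succ]
    ring
  · rw [Finset.card_insert_of_notMem h, pow_succ]
    ring

theorem rowSign_toggle {n : ℕ} {k : ℕ → ℤ} {j : ℕ} (hj : 2 ≤ j) (h1 : k (j - 1) ≤ k j)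
    (h2 : k j ≤ k (j + 1)) (s : Finset ℕ) : rowSign n k (toggle j s) = -rowSign n k s := by
  have : ∀ i, entrySign k (toggle j s) i = entrySign k s i := by
    intro i
    unfold entrySign
    refine if_congr ?_ rfl rfl
    simp only [mem_toggle]
    by_cases hi : i = j
    · subst hi
      grind
    · by_cases hi' : i + 1 = j
      · subst hi'
        grind
      · grind
  simp [rowSign, this, neg_one_pow_card_toggle]

/-- Where `StrictRow` fails, the position can be toggled unless three entries above coincide. -/
theorem toggle_mem_rowPairs {n : ℕ} {k : ℕ → ℤ} {A : (Fin n → ℤ) → ℚ} (hA : VanishesOnTriples A)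
    {p : Σ _ : Finset ℕ, Fin n → ℤ} (hp : p ∈ rowPairs n k) (hAp : A p.2 ≠ 0) {j : ℕ}
    (hj : 2 ≤ j) (hjn : j ≤ n) (h1 : k (j - 1) ≤ k j) (h2 : k j ≤ k (j + 1))
    (hl : rowOf p.2 j ≤ rowOf p.2 (j - 1)) :
    (⟨toggle j p.1, p.2⟩ : Σ _ : Finset ℕ, Fin n → ℤ) ∈ rowPairs n k := by
  obtain ⟨s, l⟩ := p
  obtain ⟨m, rfl⟩ : ∃ m, j = m + 1 := ⟨j - 1, by omega⟩
  simp only [Nat.add_sub_cancel] at *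
  rw [mem_rowPairs, mem_specialSets] at *
  simp only at *
  obtain ⟨⟨hs1, hs2⟩, hc⟩ := hp
  have triple : ∀ i, 2 ≤ i → i + 1 ≤ n → rowOf l (i - 1) = rowOf l i →
      rowOf l i ≠ rowOf l (i + 1) := fun i a b c d => hAp (hA l i a b c d)
  have e1 := hc m (by omega) (by omega)
  have e2 := hc (m + 1) (by omega) (by omega)
  have hm : m ∉ s := by
    intro hm
    have := hs1 m hm
    have e0 := hc (m - 1) (by omega) (by omega)
    have t := triple m (by omega) (by omega)
    have n1 : m - 1 ∉ s := fun h => hs2 _ h (by rwa [Nat.sub_add_cancel (by omega)])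
    have n2 := hs2 m hm
    simp only [choices, hm, n1, n2, Nat.sub_add_cancel (show 1 ≤ m by omega), if_true, if_false,
      Finset.mem_singleton] at e0 e1
    simp only [choices, n2, if_false, h2, if_true] at e2
    split_ifs at e2 <;> simp at e2 <;> omega
  have hm2 : m + 1 + 1 ∉ s := by
    intro hm2
    have := hs1 _ hm2
    have e3 := hc (m + 1 + 1) (by omega) (by omega)
    have t := triple (m + 1) (by omega) (by omega)
    have n1 : m + 1 ∉ s := fun h => hs2 _ h hm2
    simp only [choices, hm, n1, hm2, h1, if_true, if_false, Finset.mem_singleton,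
      Finset.mem_Icc] at e1 e2 e3
    simp at t
    omega
  simp only [choices, hm, hm2, h1, h2, if_true, if_false] at e1 e2
  have key : rowOf l m = k (m + 1) ∧ rowOf l (m + 1) = k (m + 1) := by
    by_cases h : m + 1 ∈ s <;> simp [h] at e1 e2 <;> omega
  refine ⟨⟨?_, ?_⟩, ?_⟩
  · intro i hi
    rw [mem_toggle] at hi
    grind
  · intro i hi
    have a1 := hs2 i
    rw [mem_toggle] at hi ⊢
    clear triple hc hs1 hs2
    rcases hi with hi | hi <;> rintro (h | h) <;> grind
  · intro i hi1 hi2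
    by_cases him : i = m
    · subst him
      simp only [choices, mem_toggle]
      by_cases h : i + 1 ∈ s <;> simp [h, hm, h1, key]
    · by_cases him : i = m + 1
      · subst him
        simp only [choices, mem_toggle]
        by_cases h : m + 1 ∈ s <;> simp [h, hm2, h2, key]
      · have := hc i hi1 hi2
        have q1 : i ∈ toggle (m + 1) s ↔ i ∈ s := by rw [mem_toggle]; grind
        have q2 : i + 1 ∈ toggle (m + 1) s ↔ i + 1 ∈ s := by rw [mem_toggle]; grind
        simpa only [choices, q1, q2] using this

theorem strictRowSum_eq_rowSum {n : ℕ} (k : ℕ → ℤ) {A : (Fin n → ℤ) → ℚ}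
    (hA : VanishesOnTriples A) : strictRowSum n k A = rowSum n k A := by
  classical
  unfold strictRowSum rowSum
  rw [← Finset.sum_filter_add_sum_filter_not (rowPairs n k)
    (fun p => StrictRow n k (rowOf p.2)), left_eq_add]
  rw [← Finset.sum_filter_of_ne (p := fun p : (Σ _ : Finset ℕ, Fin n → ℤ) => A p.2 ≠ 0)
    (f := fun p => rowSign n k p.1 * A p.2) (fun p _ h => right_ne_zero_of_mul h)]
  have hbad : ∀ l : Fin n → ℤ, ¬ StrictRow n k (rowOf l) → ∃ j, 2 ≤ j ∧ j ≤ n ∧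
      k (j - 1) ≤ k j ∧ k j ≤ k (j + 1) ∧ rowOf l j ≤ rowOf l (j - 1) := by
    intro l h
    simpa only [StrictRow, not_forall, not_lt, exists_prop] using h
  choose! j hj using hbad
  refine Finset.sum_involution (fun p _ => ⟨toggle (j p.2) p.1, p.2⟩) ?_ ?_ ?_ ?_
  · rintro ⟨s, l⟩ hp
    simp only [Finset.mem_filter] at hp
    obtain ⟨a, b, c, d, e⟩ := hj _ hp.1.2
    rw [rowSign_toggle a c d]
    ring
  · rintro ⟨s, l⟩ hp _ h
    exact toggle_ne _ _ (by simpa using h)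
  · rintro ⟨s, l⟩ hp
    simp only [Finset.mem_filter] at hp ⊢
    obtain ⟨a, b, c, d, e⟩ := hj _ hp.1.2
    exact ⟨⟨toggle_mem_rowPairs hA hp.1.1 hp.2 a b c d e, hp.1.2⟩, hp.2⟩
  · rintro ⟨s, l⟩ hp
    simp [toggle_toggle]

theorem strictRowSum_eq_zero {n : ℕ} {k : ℕ → ℤ} (A : (Fin n → ℤ) → ℚ) {j : ℕ} (hj : 2 ≤ j)
    (hjn : j ≤ n) (h1 : k (j - 1) = k j) (h2 : k j = k (j + 1)) : strictRowSum n k A = 0 := by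
  classical
  unfold strictRowSum
  rw [Finset.filter_eq_empty_iff.2, Finset.sum_empty]
  rintro ⟨s, l⟩ hp hstrict
  obtain ⟨m, rfl⟩ : ∃ m, j = m + 1 := ⟨j - 1, by omega⟩
  rw [mem_rowPairs] at hp
  have e0 := hstrict (m + 1) hj hjn h1.le h2.le
  have e1 := hp.2 m (by omega) (by omega)
  have e2 := hp.2 (m + 1) (by omega) (by omega)
  simp only [Nat.add_sub_cancel] at *
  simp only [choices, h1, ← h2, le_refl, if_true, Finset.Icc_self, ite_self,
    Finset.mem_singleton] at e1 e2
  omega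

/-- The iterated signed row sum. -/
noncomputable def triSum : (n : ℕ) → (Fin n → ℤ) → ℚ
  | 0, _ => 1
  | n + 1, k => rowSum n (rowOf k) (triSum n)

theorem vanishesOnTriples_triSum (n : ℕ) : VanishesOnTriples (triSum n) := by
  induction n with
  | zero => intro l j h1 h2; omega
  | succ n ih =>
    intro l j hj hjn h1 h2
    rw [triSum, ← strictRowSum_eq_rowSum _ ih]
    exact strictRowSum_eq_zero _ hj (by omega) h1 h2

/-- Being given by a polynomial with rational coefficients. -/
def IsPolyFun {n : ℕ} (f : (Fin n → ℤ) → ℚ) : Prop :=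
  ∃ P : MvPolynomial (Fin n) ℚ, ∀ k, f k = MvPolynomial.eval (fun i => (k i : ℚ)) P

namespace IsPolyFun

variable {n : ℕ}

theorem const (c : ℚ) : IsPolyFun (fun _ : Fin n → ℤ => c) := ⟨MvPolynomial.C c, by simp⟩

theorem mul {f g : (Fin n → ℤ) → ℚ} (hf : IsPolyFun f) (hg : IsPolyFun g) :
    IsPolyFun (fun k => f k * g k) := by
  obtain ⟨P, hP⟩ := hf
  obtain ⟨Q, hQ⟩ := hg
  exact ⟨P * Q, by simp [hP, hQ]⟩

theorem sub {f g : (Fin n → ℤ) → ℚ} (hf : IsPolyFun f) (hg : IsPolyFun g) :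
    IsPolyFun (fun k => f k - g k) := by
  obtain ⟨P, hP⟩ := hf
  obtain ⟨Q, hQ⟩ := hg
  exact ⟨P - Q, by simp [hP, hQ]⟩

theorem sum {ι : Type*} (s : Finset ι) {f : ι → (Fin n → ℤ) → ℚ}
    (hf : ∀ i, IsPolyFun (f i)) : IsPolyFun (fun k => ∑ i ∈ s, f i k) := by
  choose P hP using hf
  exact ⟨∑ i ∈ s, P i, by simp [hP]⟩

theorem prod {ι : Type*} (s : Finset ι) {f : ι → (Fin n → ℤ) → ℚ}
    (hf : ∀ i, IsPolyFun (f i)) : IsPolyFun (fun k => ∏ i ∈ s, f i k) := by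
  choose P hP using hf
  exact ⟨∏ i ∈ s, P i, by simp [hP]⟩

theorem polynomial_eval (p : Polynomial ℚ) (i : Fin n) :
    IsPolyFun (fun k => p.eval (k i : ℚ)) := by
  refine ⟨Polynomial.aeval (MvPolynomial.X i) p, fun k => ?_⟩
  induction p using Polynomial.induction_on' with
  | add p q hp hq => simp [hp, hq]
  | monomial m c => simp [Polynomial.aeval_monomial, MvPolynomial.algebraMap_eq]

end IsPolyFun

/-- Powers have polynomial discrete antiderivatives. -/
theorem exists_polynomial_antidifference (e : ℕ) :
    ∃ p : Polynomial ℚ, ∀ x : ℚ, p.eval (x + 1) - p.eval x = x ^ e := by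
  refine ⟨Polynomial.C ((e + 1 : ℚ)⁻¹) * Polynomial.bernoulli (e + 1), fun x => ?_⟩
  have h : (e + 1 : ℚ) ≠ 0 := by positivity
  rw [add_comm x 1]
  simp only [Polynomial.eval_mul, Polynomial.eval_C, Polynomial.bernoulli_eval_one_add]
  push_cast
  field_simp
  simp

theorem sum_Ico_eq_sub {f F : ℤ → ℚ} (hF : ∀ x, F (x + 1) - F x = f x) {a b : ℤ} (hab : a ≤ b) :
    ∑ x ∈ Finset.Ico a b, f x = F b - F a := by
  induction b, hab using Int.leInduction with
  | base => simp
  | succ b hb ih =>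
    rw [← Finset.insert_Ico_right_eq_Ico_add_one hb, Finset.sum_insert (by simp), ih, ← hF]
    ring

/-- The signed sum of a power over the allowed values of an entry is polynomial. -/
theorem isPolyFun_signed_choices {n : ℕ} {s : Finset ℕ} (e : ℕ) (j : Fin n) :
    IsPolyFun (fun k : Fin (n + 1) → ℤ => ∑ x ∈ choices (rowOf k) s (j.1 + 1),
      entrySign (rowOf k) s (j.1 + 1) * (x : ℚ) ^ e) := by
  have hc : ∀ k : Fin (n + 1) → ℤ, rowOf k (j.1 + 1) = k j.castSucc := fun k =>
    rowOf_succ k j.castSucc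
  have hs : ∀ k : Fin (n + 1) → ℤ, rowOf k (j.1 + 1 + 1) = k j.succ := fun k =>
    rowOf_succ k j.succ
  by_cases h1 : j.1 + 1 ∈ s
  · simpa [choices, entrySign, h1, hc] using
      IsPolyFun.polynomial_eval (Polynomial.X ^ e) j.castSucc
  by_cases h2 : j.1 + 1 + 1 ∈ s
  · simpa [choices, entrySign, h1, h2, hs] using
      IsPolyFun.polynomial_eval (Polynomial.X ^ e) j.succ
  obtain ⟨p, hp⟩ := exists_polynomial_antidifference e
  have key : ∀ k : Fin (n + 1) → ℤ, ∑ x ∈ choices (rowOf k) s (j.1 + 1),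
      entrySign (rowOf k) s (j.1 + 1) * (x : ℚ) ^ e =
      (p.comp (Polynomial.X + 1)).eval (k j.succ : ℚ) - p.eval (k j.castSucc : ℚ) := by
    intro k
    have hF : ∀ x : ℤ, p.eval ((x + 1 : ℤ) : ℚ) - p.eval (x : ℚ) = (x : ℚ) ^ e :=
      fun x => by simpa using hp x
    simp only [choices, entrySign, h1, h2, hc, hs, if_false]
    by_cases h : k j.castSucc ≤ k j.succ
    · have hI : Finset.Icc (k j.castSucc) (k j.succ) =
          Finset.Ico (k j.castSucc) (k j.succ + 1) := by ext; simp
      rw [if_pos h, hI]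
      simp only [not_lt.2 h, and_false, if_false, one_mul]
      rw [sum_Ico_eq_sub (F := fun y : ℤ => p.eval (y : ℚ)) hF (by omega)]
      simp
    · have hI : Finset.Ioo (k j.succ) (k j.castSucc) =
          Finset.Ico (k j.succ + 1) (k j.castSucc) := by ext; simp
      rw [if_neg h, hI]
      simp only [not_le.1 h, not_false_eq_true, and_self, if_true]
      rw [← Finset.mul_sum, sum_Ico_eq_sub (F := fun y : ℤ => p.eval (y : ℚ)) hF (by omega)]
      simp
  simp only [key]
  exact (IsPolyFun.polynomial_eval _ _).sub (IsPolyFun.polynomial_eval _ _)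

theorem isPolyFun_rowSum {n : ℕ} {A : (Fin n → ℤ) → ℚ} (hA : IsPolyFun A) :
    IsPolyFun (fun k : Fin (n + 1) → ℤ => rowSum n (rowOf k) A) := by
  obtain ⟨P, hP⟩ := hA
  have key : ∀ k : Fin (n + 1) → ℤ, rowSum n (rowOf k) A =
      ∑ s ∈ specialSets n, (-1) ^ s.card * ∑ d ∈ P.support, P.coeff d *
        ∏ j : Fin n, ∑ x ∈ choices (rowOf k) s (j.1 + 1),
          entrySign (rowOf k) s (j.1 + 1) * (x : ℚ) ^ d j := by
    intro k
    unfold rowSum rowPairs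
    rw [Finset.sum_sigma]
    refine Finset.sum_congr rfl fun s _ => ?_
    simp only [Finset.prod_univ_sum, rowSign, hP, MvPolynomial.eval_eq']
    simp only [Finset.mul_sum, Finset.prod_mul_distrib]
    rw [Finset.sum_comm]
    refine Finset.sum_congr rfl fun d _ => Finset.sum_congr rfl fun l _ => ?_
    ring
  simp only [key]
  exact .sum _ fun s => .mul (.const _) <| .sum _ fun d => .mul (.const _) <|
    .prod _ fun j => isPolyFun_signed_choices _ _

theorem isPolyFun_triSum (n : ℕ) : IsPolyFun (triSum n) := by
  induction n with
  | zero => exact .const 1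
  | succ n ih => exact isPolyFun_rowSum ih

/-- Polynomial functions are determined by their values on strictly increasing sequences. -/
theorem IsPolyFun.eq_of_eq_on_strictMono {n : ℕ} {f g : (Fin n → ℤ) → ℚ} (hf : IsPolyFun f)
    (hg : IsPolyFun g) (h : ∀ k, StrictMono k → f k = g k) : f = g := by
  obtain ⟨R, hR⟩ := hf.sub hg
  funext k
  let q : Polynomial ℚ := MvPolynomial.eval₂ Polynomial.C
    (fun i : Fin n => Polynomial.C (k i : ℚ) + Polynomial.C (i.1 : ℚ) * Polynomial.X) R
  have hq : ∀ t : ℤ, q.eval (t : ℚ) = f (fun i => k i + i.1 * t) - g (fun i => k i + i.1 * t) := by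
    intro t
    rw [show f (fun i => k i + i.1 * t) - g (fun i => k i + i.1 * t) = _ from hR _]
    have := MvPolynomial.eval₂_comp_left (Polynomial.evalRingHom (t : ℚ)) Polynomial.C
      (fun i : Fin n => Polynomial.C (k i : ℚ) + Polynomial.C (i.1 : ℚ) * Polynomial.X) R
    simp only [Polynomial.coe_evalRingHom] at this
    rw [this, ← MvPolynomial.eval₂_id]
    congr 1
    · ext; simp
    · ext i; simp
  obtain ⟨M, hM⟩ : ∃ M : ℤ, ∀ i, |k i| ≤ M :=
    ⟨∑ i, |k i|, fun i => Finset.single_le_sum (f := fun i => |k i|)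
      (fun _ _ => abs_nonneg _) (Finset.mem_univ i)⟩
  have hq0 : q = 0 := by
    refine Polynomial.eq_zero_of_infinite_isRoot _ (Set.Infinite.mono ?_
      ((Set.Ioi_infinite (2 * |M|)).image (f := fun t : ℤ => (t : ℚ))
        (fun _ _ _ _ h => by simpa using h)))
    rintro _ ⟨t, ht, rfl⟩
    rw [Set.mem_Ioi] at ht
    show q.eval (t : ℚ) = 0
    rw [hq, sub_eq_zero]
    refine h _ fun i j hij => ?_
    have h1 := abs_le.1 (hM i)
    have h2 := abs_le.1 (hM j)
    have h3 : (i.1 : ℤ) + 1 ≤ j.1 := by exact_mod_cast hij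
    have h4 := le_abs_self M
    have h5 := abs_nonneg M
    show k i + i.1 * t < k j + j.1 * t
    nlinarith
  have := hq 0
  simp only [hq0, Polynomial.eval_zero, mul_zero, add_zero] at this
  linarith

/-- The elements of `TSet n k` whose underlying array satisfies `StrictCond`. -/
def strictTSet (n : ℕ) (k : Fin n → ℤ) : Set ((ℕ → ℕ → ℤ) × Finset (ℕ × ℕ)) :=
  {A ∈ TSet n k | StrictCond n A.1}

/-- Append the row `k` with special positions `s` below a triangular array of size `n`. -/
def appendRow (n : ℕ) (k : ℕ → ℤ) (s : Finset ℕ) (A : (ℕ → ℕ → ℤ) × Finset (ℕ × ℕ)) :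
    (ℕ → ℕ → ℤ) × Finset (ℕ × ℕ) :=
  (fun i j => if i = n + 1 then k j else A.1 i j, A.2 ∪ s.image fun j => (n + 1, j))

theorem mem_appendRow {n : ℕ} {k : ℕ → ℤ} {s : Finset ℕ} {A : (ℕ → ℕ → ℤ) × Finset (ℕ × ℕ)}
    {i j : ℕ} : (i, j) ∈ (appendRow n k s A).2 ↔ (i, j) ∈ A.2 ∨ (i = n + 1 ∧ j ∈ s) := by
  simp only [appendRow, Finset.mem_union, Finset.mem_image, Prod.mk.injEq]
  grind

theorem bottomRow_iff {n : ℕ} {a : ℕ → ℕ → ℤ} {k : Fin n → ℤ} :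
    BottomRow n a k ↔ ∀ j, 1 ≤ j → j ≤ n → a n j = rowOf k j := by
  refine ⟨fun h j h1 h2 => ?_, fun h j => ?_⟩
  · have := h ⟨j - 1, by omega⟩
    rw [← rowOf_succ k] at this
    simpa [Nat.sub_add_cancel h1] using this
  · rw [← rowOf_succ k]
    exact h _ (by omega) j.2

theorem appendRow_mem_strictTSet {n : ℕ} {k : Fin (n + 1) → ℤ} {p : Σ _ : Finset ℕ, Fin n → ℤ}
    (hp : p ∈ rowPairs n (rowOf k)) (hstrict : StrictRow n (rowOf k) (rowOf p.2))
    {A : (ℕ → ℕ → ℤ) × Finset (ℕ × ℕ)} (hA : A ∈ strictTSet n p.2) :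
    appendRow n (rowOf k) p.1 A ∈ strictTSet (n + 1) k := by
  obtain ⟨s, l⟩ := p
  obtain ⟨a, S⟩ := A
  obtain ⟨⟨⟨htri, hS1, hS2, hS3, hS4⟩, hbot⟩, hcond⟩ := hA
  rw [mem_rowPairs, mem_specialSets] at hp
  obtain ⟨⟨hs1, hs2⟩, hc⟩ := hp
  rw [bottomRow_iff] at hbot
  simp only at *
  have hlast : ∀ j, (n + 1, j) ∉ S := fun j h => by have := hS1 _ h; simp at this
  have hrow : ∀ i j, i ≤ n → (appendRow n (rowOf k) s (a, S)).1 i j = a i j := fun i j h => by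
    simp [appendRow, show i ≠ n + 1 by omega]
  have hrow' : ∀ j, (appendRow n (rowOf k) s (a, S)).1 (n + 1) j = rowOf k j := fun j => by
    simp [appendRow]
  have hmem : ∀ i j, i ≤ n → ((i, j) ∈ (appendRow n (rowOf k) s (a, S)).2 ↔ (i, j) ∈ S) :=
    fun i j h => by rw [mem_appendRow]; simp; omega
  have hmem' : ∀ j, (n + 1, j) ∈ (appendRow n (rowOf k) s (a, S)).2 ↔ j ∈ s :=
    fun j => by rw [mem_appendRow]; simp [hlast]
  have hle : ∀ i j, (i, j) ∈ (appendRow n (rowOf k) s (a, S)).2 → i ≤ n ∨ i = n + 1 := by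
    intro i j h
    rw [mem_appendRow] at h
    rcases h with h | h
    · exact .inl (hS1 _ h).2.2
    · exact .inr h.1
  refine ⟨⟨⟨?_, ?_, ?_, ?_, ?_⟩, ?_⟩, ?_⟩
  · intro i j hij
    by_cases hi : i = n + 1
    · subst hi
      rw [hrow']
      exact rowOf_of_not _ (by omega)
    · simp only [appendRow, hi, if_false]
      exact htri _ _ (by omega)
  · rintro ⟨i, j⟩ h
    rcases hle _ _ h with hi | rfl
    · rw [hmem _ _ hi] at h
      have := hS1 _ h
      simp only at *
      omega
    · rw [hmem'] at h
      have := hs1 _ h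
      simp only
      omega
  · rintro ⟨i, j⟩ h ⟨i', j'⟩ h' hii hjj
    simp only at hii hjj
    subst hii hjj
    rcases hle _ _ h with hi | rfl
    · rw [hmem _ _ hi] at h h'
      exact hS2 _ h _ h' rfl rfl
    · rw [hmem'] at h h'
      exact hs2 _ h h'
  · rintro ⟨i, j⟩ h
    simp only
    rcases hle _ _ h with hi | rfl
    · rw [hmem _ _ hi] at h
      rw [hrow _ _ hi, hrow _ _ (by omega), hrow _ _ (by omega)]
      exact hS3 _ h
    · rw [hmem'] at h
      obtain ⟨h1, h2⟩ := hs1 _ h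
      rw [hrow', Nat.add_sub_cancel, hrow _ _ le_rfl, hrow _ _ le_rfl,
        hbot _ (by omega) (by omega), hbot _ (by omega) (by omega)]
      have e1 := hc (j - 1) (by omega) (by omega)
      have e2 := hc j (by omega) (by omega)
      have h3 : j - 1 ∉ s := fun h' => hs2 _ h' (by rwa [Nat.sub_add_cancel (by omega)])
      simp only [choices, h3, Nat.sub_add_cancel (show 1 ≤ j by omega), h, if_true, if_false,
        Finset.mem_singleton] at e1 e2
      exact ⟨e1, e2⟩
  · intro i j h1 h2 h3 h4 h5
    rcases (show i + 1 ≤ n ∨ i = n by omega) with hi | rfl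
    · rw [hmem _ _ hi] at h4 h5
      simp only [hrow _ _ hi, hrow i j (by omega)]
      exact hS4 i j h1 h2 hi h4 h5
    · rw [hmem'] at h4 h5
      rw [hrow', hrow', hrow _ _ le_rfl, hbot _ h1 h2]
      have e := hc j h1 h2
      simp only [choices, h4, h5, if_false] at e
      split_ifs at e <;> simp at e <;> omega
  · rw [bottomRow_iff]
    intro j _ _
    exact hrow' j
  · intro i j h1 h2 h3 h4 h5
    rw [hrow _ _ (by omega), hrow _ _ (by omega)]
    rcases (show i ≤ n ∨ i = n + 1 by omega) with hi | rfl
    · rw [hrow _ _ hi, hrow _ _ hi] at *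
      exact hcond i j h1 h2 hi h4 h5
    · rw [hrow', hrow'] at *
      rw [Nat.add_sub_cancel, hbot _ (by omega) (by omega), hbot _ (by omega) (by omega)]
      exact hstrict j h1 (by omega) h4 h5

theorem exists_appendRow_eq {n : ℕ} {k : Fin (n + 1) → ℤ} {B : (ℕ → ℕ → ℤ) × Finset (ℕ × ℕ)}
    (hB : B ∈ strictTSet (n + 1) k) :
    ∃ p ∈ rowPairs n (rowOf k), StrictRow n (rowOf k) (rowOf p.2) ∧
      ∃ A ∈ strictTSet n p.2, appendRow n (rowOf k) p.1 A = B := by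
  obtain ⟨b, S⟩ := B
  obtain ⟨⟨⟨htri, hS1, hS2, hS3, hS4⟩, hbot⟩, hcond⟩ := hB
  rw [bottomRow_iff] at hbot
  simp only at *
  have hbot' : ∀ j, b (n + 1) j = rowOf k j := by
    intro j
    by_cases hj : 1 ≤ j ∧ j ≤ n + 1
    · exact hbot j hj.1 hj.2
    · rw [rowOf_of_not k hj]
      exact htri _ _ (by omega)
  let s : Finset ℕ := (S.filter fun q => q.1 = n + 1).image Prod.snd
  let l : Fin n → ℤ := fun j => b n (j.1 + 1)
  have hs : ∀ j, j ∈ s ↔ (n + 1, j) ∈ S := by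
    intro j
    simp only [s, Finset.mem_image, Finset.mem_filter, Prod.exists]
    grind
  have hl : ∀ j, 1 ≤ j → j ≤ n → rowOf l j = b n j := by
    intro j h1 h2
    simp [rowOf, l, h1, h2]
  have hnot : ∀ i j, i ≤ n → ((i, j) ∈ S.filter (fun q => q.1 ≠ n + 1) ↔ (i, j) ∈ S) := by
    intro i j hi
    simp
    omega
  refine ⟨⟨s, l⟩, ?_, ?_,
    (fun i j => if i = n + 1 then 0 else b i j, S.filter fun q => q.1 ≠ n + 1), ?_, ?_⟩
  · rw [mem_rowPairs, mem_specialSets]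
    refine ⟨⟨fun j hj => ?_, fun j hj hj' => ?_⟩, fun j h1 h2 => ?_⟩
    · have := hS1 _ ((hs j).1 hj)
      simp only at this
      omega
    · exact hS2 _ ((hs j).1 hj) _ ((hs _).1 hj') rfl rfl
    · simp only
      rw [hl j h1 h2]
      unfold choices
      split_ifs with c1 c2 c3
      · have := (hS3 _ ((hs j).1 c1)).2
        simpa [hbot'] using this
      · have := (hS3 _ ((hs _).1 c2)).1
        simpa [hbot'] using this
      · rw [hs] at c1 c2
        have := hS4 n j h1 h2 le_rfl c1 c2
        rw [hbot', hbot'] at this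
        simpa using this.1 c3
      · rw [hs] at c1 c2
        have := hS4 n j h1 h2 le_rfl c1 c2
        rw [hbot', hbot'] at this
        simpa using this.2 (not_le.1 c3)
  · intro j h1 h2 h3 h4
    simp only
    rw [hl _ (by omega) (by omega), hl _ (by omega) (by omega)]
    exact hcond (n + 1) j h1 (by omega) le_rfl (by rwa [hbot', hbot']) (by rwa [hbot', hbot'])
  · refine ⟨⟨⟨?_, ?_, ?_, ?_, ?_⟩, ?_⟩, ?_⟩
    · intro i j hij
      by_cases hi : i = n + 1
      · simp [hi]
      · simp only [hi, if_false]
        exact htri _ _ (by omega)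
    · rintro ⟨i, j⟩ h
      simp only [Finset.mem_filter] at h
      have := hS1 _ h.1
      simp only at *
      omega
    · intro p hp q hq
      exact hS2 p (Finset.mem_filter.1 hp).1 q (Finset.mem_filter.1 hq).1
    · rintro ⟨i, j⟩ h
      simp only [Finset.mem_filter] at h
      have h1 := hS1 _ h.1
      have h2 := hS3 _ h.1
      simp only at *
      simpa only [h.2, show i - 1 ≠ n + 1 by omega, if_false] using h2
    · intro i j h1 h2 h3 h4 h5
      rw [hnot _ _ h3] at h4 h5
      simpa only [show i ≠ n + 1 by omega, show i + 1 ≠ n + 1 by omega, if_false] using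
        hS4 i j h1 h2 (by omega) h4 h5
    · rw [bottomRow_iff]
      intro j h1 h2
      simpa using (hl j h1 h2).symm
    · intro i j h1 h2 h3
      simpa only [show i ≠ n + 1 by omega, show i - 1 ≠ n + 1 by omega, if_false] using
        hcond i j h1 h2 (by omega)
  · refine Prod.ext ?_ ?_
    · funext i j
      by_cases hi : i = n + 1
      · simp [appendRow, hi, hbot']
      · simp [appendRow, hi]
    · ext ⟨i, j⟩
      rw [mem_appendRow]
      simp only [Finset.mem_filter, hs]
      grind

theorem strictTSet_succ {n : ℕ} (k : Fin (n + 1) → ℤ) : strictTSet (n + 1) k =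
    ⋃ p ∈ {p | p ∈ rowPairs n (rowOf k) ∧ StrictRow n (rowOf k) (rowOf p.2)},
      appendRow n (rowOf k) p.1 '' strictTSet n p.2 := by
  ext B
  simp only [Set.mem_iUnion, Set.mem_image, Set.mem_ofPred_eq, exists_prop]
  constructor
  · intro hB
    obtain ⟨p, h1, h2, h3⟩ := exists_appendRow_eq hB
    exact ⟨p, ⟨h1, h2⟩, h3⟩
  · rintro ⟨p, ⟨h1, h2⟩, A, hA, rfl⟩
    exact appendRow_mem_strictTSet h1 h2 hA

theorem row_le_of_mem_strictTSet {n : ℕ} {k : Fin n → ℤ} {A : (ℕ → ℕ → ℤ) × Finset (ℕ × ℕ)}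
    (hA : A ∈ strictTSet n k) {i j : ℕ} (h : (i, j) ∈ A.2) : i ≤ n :=
  (hA.1.1.2.1 _ h).2.2

theorem eq_of_appendRow_eq {n : ℕ} {k : Fin (n + 1) → ℤ} {p q : Σ _ : Finset ℕ, Fin n → ℤ}
    {A B : (ℕ → ℕ → ℤ) × Finset (ℕ × ℕ)} (hA : A ∈ strictTSet n p.2) (hB : B ∈ strictTSet n q.2)
    (h : appendRow n (rowOf k) p.1 A = appendRow n (rowOf k) q.1 B) : p = q ∧ A = B := by
  obtain ⟨s, l⟩ := p
  obtain ⟨t, m⟩ := q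
  have h1 : A.1 = B.1 := by
    funext i j
    by_cases hi : i = n + 1
    · rw [hA.1.1.1 i j (by omega), hB.1.1.1 i j (by omega)]
    · simpa [appendRow, hi] using congrFun (congrFun (congrArg Prod.fst h) i) j
  have hlm : l = m := by
    funext j
    exact (hA.1.2 j).symm.trans ((congrFun (congrFun h1 n) _).trans (hB.1.2 j))
  have hmem : ∀ i j, ((i, j) ∈ A.2 ∨ (i = n + 1 ∧ j ∈ s)) ↔
      ((i, j) ∈ B.2 ∨ (i = n + 1 ∧ j ∈ t)) := by
    intro i j
    have := congrArg (fun C => (i, j) ∈ C.2) h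
    simpa [mem_appendRow] using this
  have hA' : ∀ i j, (i, j) ∈ A.2 → i ≤ n := fun i j => row_le_of_mem_strictTSet hA
  have hB' : ∀ i j, (i, j) ∈ B.2 → i ≤ n := fun i j => row_le_of_mem_strictTSet hB
  have hst : s = t := by
    ext j
    have h2 := hmem (n + 1) j
    have h3 := hA' (n + 1) j
    have h4 := hB' (n + 1) j
    simp only [true_and] at h2
    constructor <;> intro h5
    · exact (h2.1 (.inr h5)).resolve_left fun h6 => by have := h4 h6; omega
    · exact (h2.2 (.inr h5)).resolve_left fun h6 => by have := h3 h6; omega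
  have hAB : A.2 = B.2 := by
    ext ⟨i, j⟩
    have h2 := hmem i j
    constructor <;> intro h5
    · exact (h2.1 (.inl h5)).resolve_right fun h6 => by have := hA' i j h5; omega
    · exact (h2.2 (.inl h5)).resolve_right fun h6 => by have := hB' i j h5; omega
  subst hst hlm
  exact ⟨rfl, Prod.ext h1 hAB⟩

theorem strictTSet_zero (k : Fin 0 → ℤ) : strictTSet 0 k = {(fun _ _ => 0, ∅)} := by
  ext ⟨a, S⟩
  simp only [Set.mem_singleton_iff, Prod.mk.injEq]
  constructor
  · rintro ⟨⟨⟨h1, h2⟩, -⟩, -⟩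
    refine ⟨?_, Finset.eq_empty_of_forall_notMem fun p hp => ?_⟩
    · funext i j
      exact h1 i j (by omega)
    · have := h2.1 p hp
      omega
  · rintro ⟨rfl, rfl⟩
    refine ⟨⟨⟨fun _ _ _ => rfl, by simp, by simp, by simp, ?_⟩, fun j => j.elim0⟩, ?_⟩
    · intro i j _ _ h
      omega
    · intro i j _ _ h
      omega

theorem finite_strictTSet (n : ℕ) (k : Fin n → ℤ) : (strictTSet n k).Finite := by
  induction n with
  | zero =>
    rw [strictTSet_zero]
    exact Set.finite_singleton _
  | succ n ih =>
    rw [strictTSet_succ]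
    exact Set.Finite.biUnion ((rowPairs n (rowOf k)).finite_toSet.subset fun p hp => hp.1)
      fun p _ => (ih p.2).image _

theorem prod_entrySign (n : ℕ) (k : ℕ → ℤ) (s : Finset ℕ) :
    ∏ j : Fin n, entrySign k s (j.1 + 1) = (-1) ^ ((Finset.Icc 1 n).filter fun j =>
      j ∉ s ∧ j + 1 ∉ s ∧ k (j + 1) < k j).card := by
  rw [Fin.prod_univ_eq_prod_range (fun j => entrySign k s (j + 1)) n,
    Finset.range_eq_Ico, Finset.prod_Ico_add' (fun j => entrySign k s j) 0 n 1]
  simp only [entrySign, Finset.prod_ite, Finset.prod_const, one_pow, mul_one]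
  rfl

theorem neg_one_pow_sT_appendRow {n : ℕ} {k : ℕ → ℤ} {p : Σ _ : Finset ℕ, Fin n → ℤ}
    {A : (ℕ → ℕ → ℤ) × Finset (ℕ × ℕ)} (hA : A ∈ strictTSet n p.2) :
    (-1 : ℚ) ^ sT (n + 1) (appendRow n k p.1 A).1 (appendRow n k p.1 A).2 =
      rowSign n k p.1 * (-1) ^ sT n A.1 A.2 := by
  have hA' : ∀ i j, (i, j) ∈ A.2 → i ≤ n := fun i j => row_le_of_mem_strictTSet hA
  have hcard : (appendRow n k p.1 A).2.card = A.2.card + p.1.card := by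
    simp only [appendRow]
    rw [Finset.card_union_of_disjoint, Finset.card_image_of_injective _ (Prod.mk_right_injective _)]
    rw [Finset.disjoint_left]
    rintro ⟨i, j⟩ h1 h2
    simp only [Finset.mem_image, Prod.mk.injEq] at h2
    obtain ⟨_, _, rfl, _⟩ := h2
    have := hA' _ _ h1
    omega
  have hinv : invF (n + 1) (appendRow n k p.1 A).1 (appendRow n k p.1 A).2 =
      invF n A.1 A.2 ∪ ((Finset.Icc 1 n).filter fun j =>
        j ∉ p.1 ∧ j + 1 ∉ p.1 ∧ k (j + 1) < k j).image (Prod.mk n) := by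
    ext ⟨i, j⟩
    simp only [invF, Finset.mem_filter, Finset.mem_union, Finset.mem_image, Finset.mem_product,
      Finset.mem_range, Finset.mem_Icc, mem_appendRow, Prod.mk.injEq]
    by_cases hi : i = n
    · subst hi
      have h1 : (i + 1, j) ∉ A.2 := fun h => by have := hA' _ _ h; omega
      have h2 : (i + 1, j + 1) ∉ A.2 := fun h => by have := hA' _ _ h; omega
      simp only [appendRow, h1, h2, if_true, false_or, true_and]
      constructor
      · rintro ⟨_, a, b, _, c, d, e⟩
        exact .inr ⟨j, ⟨⟨a, b⟩, c, d, e⟩, rfl⟩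
      · rintro (⟨_, _, _, a, _⟩ | ⟨_, ⟨⟨a, b⟩, c, d, e⟩, rfl⟩)
        · omega
        · exact ⟨⟨by omega, by omega⟩, a, b, le_rfl, c, d, e⟩
    · simp only [appendRow, show i + 1 ≠ n + 1 by omega, if_false, false_and, or_false]
      constructor
      · rintro ⟨_, a, b, c, d⟩
        exact .inl ⟨⟨by omega, by omega⟩, a, b, by omega, d⟩
      · rintro (⟨_, a, b, c, d⟩ | ⟨_, _, h, _⟩)
        · exact ⟨⟨by omega, by omega⟩, a, b, by omega, d⟩
        · omega
  have hdisj : Disjoint (invF n A.1 A.2) (((Finset.Icc 1 n).filter fun j =>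
        j ∉ p.1 ∧ j + 1 ∉ p.1 ∧ k (j + 1) < k j).image (Prod.mk n)) := by
    rw [Finset.disjoint_left]
    rintro ⟨i, j⟩ h1 h2
    simp only [invF, Finset.mem_filter] at h1
    simp only [Finset.mem_image, Prod.mk.injEq] at h2
    obtain ⟨_, _, rfl, _⟩ := h2
    omega
  unfold sT
  rw [hcard, hinv, Finset.card_union_of_disjoint hdisj,
    Finset.card_image_of_injective _ (Prod.mk_right_injective _), rowSign, prod_entrySign]
  simp only [pow_add]
  ring

theorem finsum_strictTSet_succ {n : ℕ} (k : Fin (n + 1) → ℤ) :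
    ∑ᶠ A ∈ strictTSet (n + 1) k, (-1 : ℚ) ^ sT (n + 1) A.1 A.2 =
      strictRowSum n (rowOf k) fun l => ∑ᶠ A ∈ strictTSet n l, (-1 : ℚ) ^ sT n A.1 A.2 := by
  classical
  have hset : {p | p ∈ rowPairs n (rowOf k) ∧ StrictRow n (rowOf k) (rowOf p.2)} =
      (((rowPairs n (rowOf k)).filter fun p => StrictRow n (rowOf k) (rowOf p.2) :
        Finset (Σ _ : Finset ℕ, Fin n → ℤ)) : Set (Σ _ : Finset ℕ, Fin n → ℤ)) := by
    ext; simp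
  rw [strictTSet_succ, hset, finsum_mem_biUnion _ (Finset.finite_toSet _)
    fun p _ => (finite_strictTSet n p.2).image _, finsum_mem_coe_finset, strictRowSum]
  · refine Finset.sum_congr (by congr!) fun p _ => ?_
    rw [finsum_mem_image fun A hA B hB h => (eq_of_appendRow_eq (p := p) (q := p) hA hB h).2,
      mul_finsum_mem]
    exact finsum_mem_congr rfl fun A hA => neg_one_pow_sT_appendRow hA
  · intro p _ q _ hpq
    rw [Function.onFun, Set.disjoint_left]
    rintro _ ⟨A, hA, rfl⟩ ⟨B, hB, h⟩
    exact hpq (eq_of_appendRow_eq hB hA h).1.symm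

theorem finsum_strictTSet_eq_triSum (n : ℕ) (k : Fin n → ℤ) :
    ∑ᶠ A ∈ strictTSet n k, (-1 : ℚ) ^ sT n A.1 A.2 = triSum n k := by
  induction n with
  | zero =>
    rw [strictTSet_zero, finsum_mem_singleton]
    simp [sT, invF, triSum]
  | succ n ih =>
    rw [finsum_strictTSet_succ, triSum, ← strictRowSum_eq_rowSum _ (vanishesOnTriples_triSum n)]
    exact congrArg _ (funext ih)

theorem rowOf_lt_rowOf {n : ℕ} {k : Fin n → ℤ} (hk : StrictMono k) {j : ℕ} (h1 : 1 ≤ j)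
    (h2 : j + 1 ≤ n) : rowOf k j < rowOf k (j + 1) := by
  simp only [rowOf, h1, h2, show j ≤ n by omega, show 1 ≤ j + 1 by omega, and_self, dif_pos]
  exact hk (Fin.mk_lt_mk.2 (by omega))

/-- Over a strictly increasing bottom row only Monotone Triangles remain. -/
theorem strictTSet_of_strictMono {n : ℕ} {k : Fin n → ℤ} (hk : StrictMono k) :
    strictTSet n k = (fun a => (a, ∅)) '' MTset n k := by
  ext ⟨a, S⟩
  simp only [Set.mem_image, Prod.mk.injEq]
  constructor
  · rintro ⟨⟨⟨htri, hS1, -, hS3, hS4⟩, hbot⟩, hcond⟩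
    have hrows : ∀ d i, i + d = n → ∀ j, 1 ≤ j → j + 1 ≤ i → a i j < a i (j + 1) := by
      intro d
      induction d with
      | zero =>
        rintro i rfl j h1 h2
        have hb := bottomRow_iff.1 hbot
        simp only [add_zero] at *
        rw [hb j h1 (by omega), hb (j + 1) (by omega) h2]
        exact rowOf_lt_rowOf hk h1 h2
      | succ d ih =>
        intro i hi j h1 h2
        exact hcond (i + 1) (j + 1) (by omega) (by omega) (by omega)
          (ih (i + 1) (by omega) j h1 (by omega)).le
          (ih (i + 1) (by omega) (j + 1) (by omega) (by omega)).le
    have hlt : ∀ i j, 1 ≤ j → j + 1 ≤ i → i ≤ n → a i j < a i (j + 1) := fun i j h1 h2 h3 =>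
      hrows (n - i) i (by omega) j h1 h2
    have hS : S = ∅ := by
      refine Finset.eq_empty_of_forall_notMem fun p hp => ?_
      have h1 := hS1 p hp
      have h2 := hS3 p hp
      have h3 := hlt (p.1 - 1) (p.2 - 1) (by omega) (by omega) (by omega)
      rw [Nat.sub_add_cancel (by omega)] at h3
      simp only at h2
      omega
    subst hS
    exact ⟨a, ⟨⟨htri, hlt, fun i j h1 h2 h3 => (hS4 i j h1 h2 h3 (by simp) (by simp)).1
      (hlt (i + 1) j h1 (by omega) h3).le⟩, hbot⟩, rfl, rfl⟩
  · rintro ⟨_, ⟨⟨htri, hlt, hmon⟩, hbot⟩, rfl, rfl⟩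
    refine ⟨⟨⟨htri, by simp, by simp, by simp, fun i j h1 h2 h3 _ _ =>
      ⟨fun _ => hmon i j h1 h2 h3, fun h => ?_⟩⟩, hbot⟩, fun i j h1 h2 h3 _ _ => ?_⟩
    · exact absurd (hlt (i + 1) j h1 (by omega) h3) (by simpa using h.le)
    · have := hlt (i - 1) (j - 1) (by omega) (by omega) (by omega)
      rwa [Nat.sub_add_cancel (by omega)] at this

theorem finsum_strictTSet_of_strictMono {n : ℕ} {k : Fin n → ℤ} (hk : StrictMono k) :
    ∑ᶠ A ∈ strictTSet n k, (-1 : ℚ) ^ sT n A.1 A.2 = ((MTset n k).ncard : ℚ) := by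
  have hfin := finite_strictTSet n k
  have hinj : Function.Injective fun a : ℕ → ℕ → ℤ => (a, (∅ : Finset (ℕ × ℕ))) :=
    fun a b h => (Prod.mk.inj h).1
  rw [strictTSet_of_strictMono hk] at hfin ⊢
  have hfin' : (MTset n k).Finite := hfin.of_finite_image hinj.injOn
  rw [finsum_mem_image hinj.injOn, Set.ncard_eq_toFinset_card _ hfin', Finset.card_eq_sum_ones,
    Nat.cast_sum, Nat.cast_one, ← finsum_mem_eq_finite_toFinset_sum]
  refine finsum_mem_congr rfl fun a ha => ?_
  have hinv : invF n a ∅ = ∅ := by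
    refine Finset.filter_eq_empty_iff.2 fun p _ h => ?_
    exact absurd (ha.1.2.1 (p.1 + 1) p.2 h.1 (by omega) h.2.2.1) (by simpa using h.2.2.2.2.2.le)
  simp [sT, hinv]

/-- For every `n ≥ 1` and every `k ∈ ℤⁿ`, `α(n;k)` equals the signed sum over
those elements of `𝒯ₙ(k)` whose underlying array satisfies
`a_{i,j-1} ≤ a_{i,j} ≤ a_{i,j+1} → a_{i-1,j-1} < a_{i-1,j}`. -/
theorem alpha_eq_signed_sum_TSet_strict (n : ℕ) (hn : 1 ≤ n)
    (α : (Fin n → ℤ) → ℚ) (hα : IsAlpha n α) (k : Fin n → ℤ) :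
    α k = ∑ᶠ A ∈ {A ∈ TSet n k | StrictCond n A.1}, ((-1 : ℚ)) ^ (sT n A.1 A.2) := by
  obtain ⟨⟨P, -, hP⟩, hcount⟩ := hα
  have h : α = triSum n := IsPolyFun.eq_of_eq_on_strictMono ⟨P, hP⟩ (isPolyFun_triSum n)
      fun k hk => by
    rw [hcount k hk, ← finsum_strictTSet_eq_triSum, finsum_strictTSet_of_strictMono hk]
  rw [h]
  exact (finsum_strictTSet_eq_triSum n k).symm
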